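/- arXiv:2409.03041 — 3 statements merged into one kernel-verified Lean document; each statement's English description precedes it below -/
import Mathlib

section
/- Let $F : \mathbb{R}^n \to \mathbb{R}^n$ be continuously differentiable, let $u^* \in \mathbb{R}^n$ satisfy $F(u^*) = 0$, let $R \in \mathbb{R}^{m \times n}$ and $P := R^T$, and assume the $m \times m$ matrix $R\, DF(u^*)\, P$ is invertible. Then there exist an open neighborhood $U \subseteq \mathbb{R}^n$ of $u^*$, an open neighborhood $W \subseteq \mathbb{R}^m$ of $0$, and a continuously differentiable map $T : U \to \mathbb{R}^m$ such that $T(u^*) = 0$, for every $u \in U$ the vector $T(u)$ is the unique element $t \in W$ with $R\, F(u - P\, t) = 0$, and the derivative at $u^*$ satisfies $DT(u^*) = \big(R\, DF(u^*)\, P\big)^{-1} R\, DF(u^*)$. -/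
open Matrix

/-- Matrix-vector multiplication as a continuous linear map. -/
noncomputable def mvCLM {a b : ℕ} (A : Matrix (Fin a) (Fin b) ℝ) :
    (Fin b → ℝ) →L[ℝ] (Fin a → ℝ) :=
  LinearMap.toContinuousLinearMap A.mulVecLin

theorem mvCLM_apply {a b : ℕ} (A : Matrix (Fin a) (Fin b) ℝ) (v : Fin b → ℝ) :
    mvCLM A v = A *ᵥ v := rfl

/-- Local existence, uniqueness, and differentiability of the nonlinear Schwarz
correction map `T`, defined implicitly by `R F(u - P T(u)) = 0` with `P = Rᵀ`,
near a zero `u*` of `F`, together with the formula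
`DT(u*) = (R DF(u*) P)⁻¹ R DF(u*)`. -/
theorem nonlinear_schwarz_correction_exists {n m : ℕ}
    (F : (Fin n → ℝ) → (Fin n → ℝ)) (hF : ContDiff ℝ 1 F)
    (ustar : Fin n → ℝ) (hzero : F ustar = 0)
    (R : Matrix (Fin m) (Fin n) ℝ)
    (J : Matrix (Fin n) (Fin n) ℝ)
    (hJ : ∀ v, fderiv ℝ F ustar v = J *ᵥ v)
    (hinv : IsUnit (R * J * Rᵀ)) :
    ∃ (U : Set (Fin n → ℝ)) (W : Set (Fin m → ℝ)) (T : (Fin n → ℝ) → (Fin m → ℝ)),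
      IsOpen U ∧ ustar ∈ U ∧ IsOpen W ∧ (0 : Fin m → ℝ) ∈ W ∧
      ContDiffOn ℝ 1 T U ∧ T ustar = 0 ∧
      (∀ u ∈ U, T u ∈ W ∧ R *ᵥ F (u - Rᵀ *ᵥ T u) = 0 ∧
        ∀ t ∈ W, R *ᵥ F (u - Rᵀ *ᵥ t) = 0 → t = T u) ∧
      (∀ v, fderiv ℝ T ustar v = (R * J * Rᵀ)⁻¹ *ᵥ (R *ᵥ (J *ᵥ v))) := by
  set K : Matrix (Fin m) (Fin m) ℝ := (R * J * Rᵀ)⁻¹ with hK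
  have hdet : IsUnit (R * J * Rᵀ).det := (Matrix.isUnit_iff_isUnit_det _).1 hinv
  have hK1 : (R * J * Rᵀ) * K = 1 := Matrix.mul_nonsing_inv _ hdet
  have hK2 : K * (R * J * Rᵀ) = 1 := Matrix.nonsing_inv_mul _ hdet
  let S : (Fin n → ℝ) × (Fin m → ℝ) →L[ℝ] (Fin n → ℝ) :=
    ContinuousLinearMap.fst ℝ _ _ - mvCLM Rᵀ ∘L ContinuousLinearMap.snd ℝ _ _
  let f : (Fin n → ℝ) × (Fin m → ℝ) → (Fin m → ℝ) := fun p => mvCLM R (F (S p))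
  have hS0 : S (ustar, 0) = ustar := by simp [S]
  have hf : ContDiff ℝ 1 f := (mvCLM R).contDiff.comp (hF.comp S.contDiff)
  have hFd : HasFDerivAt F (fderiv ℝ F ustar) (S (ustar, 0)) := by
    rw [hS0]
    exact (hF.differentiable one_ne_zero ustar).hasFDerivAt
  have hfd : fderiv ℝ f (ustar, 0) = mvCLM R ∘L (fderiv ℝ F ustar ∘L S) :=
    ((mvCLM R).hasFDerivAt.comp (ustar, (0 : Fin m → ℝ))
      (hFd.comp (ustar, (0 : Fin m → ℝ)) S.hasFDerivAt)).fderiv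
  have hinr : fderiv ℝ f (ustar, 0) ∘L .inr ℝ (Fin n → ℝ) (Fin m → ℝ)
      = -mvCLM (R * J * Rᵀ) := by
    rw [hfd]
    refine ContinuousLinearMap.ext fun v => ?_
    simp [S, mvCLM_apply, hJ, Matrix.mulVec_neg, Matrix.mulVec_mulVec, Matrix.mul_assoc]
  have hinl : fderiv ℝ f (ustar, 0) ∘L .inl ℝ (Fin n → ℝ) (Fin m → ℝ)
      = mvCLM (R * J) := by
    rw [hfd]
    refine ContinuousLinearMap.ext fun v => ?_
    simp [S, mvCLM_apply, hJ, Matrix.mulVec_mulVec]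
  have h1 : (-mvCLM (R * J * Rᵀ)) ∘L (-mvCLM K) = .id ℝ _ := by
    refine ContinuousLinearMap.ext fun v => ?_
    simp only [ContinuousLinearMap.comp_apply, ContinuousLinearMap.neg_apply, map_neg, neg_neg,
      mvCLM_apply, Matrix.mulVec_mulVec, hK1, Matrix.one_mulVec, ContinuousLinearMap.id_apply]
  have h2 : (-mvCLM K) ∘L (-mvCLM (R * J * Rᵀ)) = .id ℝ _ := by
    refine ContinuousLinearMap.ext fun v => ?_
    simp only [ContinuousLinearMap.comp_apply, ContinuousLinearMap.neg_apply, map_neg, neg_neg,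
      mvCLM_apply, Matrix.mulVec_mulVec, hK2, Matrix.one_mulVec, ContinuousLinearMap.id_apply]
  have hI : (fderiv ℝ f (ustar, 0) ∘L .inr ℝ (Fin n → ℝ) (Fin m → ℝ)).IsInvertible := by
    rw [hinr]
    exact ContinuousLinearMap.IsInvertible.of_inverse h1 h2
  have cdf : ContDiffAt ℝ 1 f (ustar, 0) := hf.contDiffAt
  have hf0 : f (ustar, 0) = 0 := by
    change mvCLM R (F (S (ustar, 0))) = 0
    rw [hS0, hzero, map_zero]
  have hT0 := cdf.implicitFunction_apply_self one_ne_zero hI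
  have hTe := cdf.eventually_apply_implicitFunction one_ne_zero hI
  have hTu := cdf.eventually_apply_eq_iff_implicitFunction one_ne_zero hI
  have hTd := (cdf.hasStrictFDerivAt_implicitFunction one_ne_zero hI).hasFDerivAt.fderiv
  have hTc := cdf.contDiffAt_implicitFunction one_ne_zero hI
  rw [hinr, hinl, ContinuousLinearMap.inverse_eq h1 h2] at hTd
  generalize cdf.implicitFunction one_ne_zero hI = T at hT0 hTe hTu hTd hTc
  simp only [hf0] at hT0 hTe hTu hTd hTc
  rw [nhds_prod_eq] at hTu
  obtain ⟨A, hA, B, hB, hAB⟩ := Filter.eventually_prod_iff.1 hTu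
  obtain ⟨W, hWB, hWo, hW0⟩ := eventually_nhds_iff.1 hB
  have hTW : ∀ᶠ u in nhds ustar, T u ∈ W :=
    hTc.continuousAt.eventually_mem (by rw [hT0]; exact hWo.mem_nhds hW0)
  obtain ⟨U, hU, hUo, hU0⟩ := eventually_nhds_iff.1
    (((hA.and hTe).and hTW).and (hTc.eventually (by simp)))
  have hfe : ∀ u t, f (u, t) = R *ᵥ F (u - Rᵀ *ᵥ t) := fun u t => by
    simp [f, S, mvCLM_apply]
  refine ⟨U, W, T, hUo, hU0, hWo, hW0, fun u hu => (hU u hu).2.contDiffWithinAt, hT0,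
    fun u hu => ⟨(hU u hu).1.2, ?_, fun t ht h => ?_⟩, fun v => ?_⟩
  · rw [← hfe]
    exact (hU u hu).1.1.2
  · rw [← hfe] at h
    exact ((hAB (hU u hu).1.1.1 (hWB t ht)).1 h).symm
  · rw [hTd]
    simp [mvCLM_apply, Matrix.mulVec_mulVec]
end

section
/- Let $F : \mathbb{R}^n \to \mathbb{R}^n$ be continuously differentiable, $R \in \mathbb{R}^{m \times n}$, $P := R^T$, $U \subseteq \mathbb{R}^n$ open, and let $T : U \to \mathbb{R}^m$ be a differentiable map satisfying $R\, F(u - P\, T(u)) = 0$ for all $u \in U$. Fix $u \in U$ and set $w := u - P\, T(u)$. If the $m \times m$ matrix $R\, DF(w)\, P$ is invertible, then $DT(u) = \big(R\, DF(w)\, P\big)^{-1} R\, DF(w)$. -/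
open Matrix

/-- Derivative formula for an implicitly defined nonlinear Schwarz correction:
if `R F(u - Rᵀ T(u)) = 0` on an open set `U`, `w = u - Rᵀ T(u)`, and
`R DF(w) Rᵀ` is invertible, then `DT(u) = (R DF(w) Rᵀ)⁻¹ R DF(w)`. -/
theorem nonlinear_schwarz_correction_deriv {n m : ℕ}
    (F : (Fin n → ℝ) → (Fin n → ℝ)) (hF : ContDiff ℝ 1 F)
    (R : Matrix (Fin m) (Fin n) ℝ)
    (U : Set (Fin n → ℝ)) (hU : IsOpen U)
    (T : (Fin n → ℝ) → (Fin m → ℝ))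
    (hTdiff : ∀ u ∈ U, DifferentiableAt ℝ T u)
    (heq : ∀ u ∈ U, R *ᵥ F (u - Rᵀ *ᵥ T u) = 0)
    (u : Fin n → ℝ) (hu : u ∈ U)
    (w : Fin n → ℝ) (hw : w = u - Rᵀ *ᵥ T u)
    (J : Matrix (Fin n) (Fin n) ℝ)
    (hJ : ∀ v, fderiv ℝ F w v = J *ᵥ v)
    (hinv : IsUnit (R * J * Rᵀ)) :
    ∀ v, fderiv ℝ T u v = (R * J * Rᵀ)⁻¹ *ᵥ (R *ᵥ (J *ᵥ v)) := by
  intro v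
  have hFw : HasFDerivAt F (fderiv ℝ F w) (u - Rᵀ *ᵥ T u) := by
    rw [← hw]
    exact (hF.differentiable (by norm_num) w).hasFDerivAt
  have hT := (hTdiff u hu).hasFDerivAt
  let A := LinearMap.toContinuousLinearMap (Matrix.mulVecLin R)
  let B := LinearMap.toContinuousLinearMap (Matrix.mulVecLin Rᵀ)
  have h1 : HasFDerivAt (fun x => x - Rᵀ *ᵥ T x)
      (ContinuousLinearMap.id ℝ _ - B.comp (fderiv ℝ T u)) u :=
    (hasFDerivAt_id u).sub (B.hasFDerivAt.comp u hT)
  have h2 : HasFDerivAt (fun x => F (x - Rᵀ *ᵥ T x)) _ u :=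
    HasFDerivAt.comp (g := F) u hFw h1
  have h3 : HasFDerivAt (fun x => R *ᵥ F (x - Rᵀ *ᵥ T x)) _ u :=
    A.hasFDerivAt.comp u h2
  have h0 : HasFDerivAt (fun x => R *ᵥ F (x - Rᵀ *ᵥ T x))
      (0 : (Fin n → ℝ) →L[ℝ] (Fin m → ℝ)) u := by
    refine (hasFDerivAt_const (0 : Fin m → ℝ) u).congr_of_eventuallyEq ?_
    filter_upwards [hU.mem_nhds hu] with x hx using heq x hx
  have h4 := DFunLike.congr_fun (h3.unique h0) v
  have h5 : R *ᵥ (fderiv ℝ F w (v - Rᵀ *ᵥ (fderiv ℝ T u v))) = 0 := h4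
  rw [hJ, Matrix.mulVec_sub, Matrix.mulVec_sub, sub_eq_zero] at h5
  rw [h5, Matrix.mulVec_mulVec, Matrix.mulVec_mulVec, Matrix.mulVec_mulVec,
    Matrix.mul_assoc _ R J, Matrix.mul_assoc _ (R * J), Matrix.nonsing_inv_mul _ ((Matrix.isUnit_iff_isUnit_det _).1 hinv),
    Matrix.one_mulVec]
end

section
/- Let $F : \mathbb{R}^n \to \mathbb{R}^n$ be continuously differentiable, let $u^* \in \mathbb{R}^n$ with $F(u^*) = 0$, and for $i = 0, 1, \dots, N$ let $R_i \in \mathbb{R}^{m_i \times n}$, $P_i := R_i^T$, assume $M_i := R_i\, DF(u^*)\, P_i$ is invertible, and let $T_i$ be differentiable maps on a neighborhood of $u^*$ with $T_i(u^*) = 0$, $R_i F(u - P_i T_i(u)) = 0$, and $DT_i(u^*) = M_i^{-1} R_i\, DF(u^*)$. Then the Jacobian of the hybrid two-level nonlinear Schwarz operator $\mathcal{F}_h(u) := \sum_{i=1}^N P_i T_i(u - P_0 T_0(u)) + P_0 T_0(u)$ at the solution is the hybrid two-level Schwarz preconditioned Jacobian: $D\mathcal{F}_h(u^*) = \Big(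 \sum_{i=1}^{N} P_i M_i^{-1} R_i \big(I_n - DF(u^*)\, P_0 M_0^{-1} R_0\big) + P_0 M_0^{-1} R_0 \Big)\, DF(u^*)$. -/
open Matrix

/-- The Jacobian of the hybrid two-level nonlinear Schwarz operator
`𝓕ₕ(u) = ∑_{i=1}^N Pᵢ Tᵢ(u - P₀ T₀(u)) + P₀ T₀(u)` at a zero `u*` of `F`
equals the hybrid two-level Schwarz preconditioned Jacobian
`(∑_{i=1}^N Pᵢ Mᵢ⁻¹ Rᵢ (I - DF(u*) P₀ M₀⁻¹ R₀) + P₀ M₀⁻¹ R₀) DF(u*)`,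
with `Pᵢ = Rᵢᵀ` and `Mᵢ = Rᵢ DF(u*) Pᵢ`; index `0` is the coarse level. -/
theorem hybrid_two_level_schwarz_jacobian {n N : ℕ} {m : Fin (N + 1) → ℕ}
    (F : (Fin n → ℝ) → (Fin n → ℝ)) (hF : ContDiff ℝ 1 F)
    (ustar : Fin n → ℝ) (hzero : F ustar = 0)
    (J : Matrix (Fin n) (Fin n) ℝ)
    (hJ : ∀ v, fderiv ℝ F ustar v = J *ᵥ v)
    (R : ∀ i, Matrix (Fin (m i)) (Fin n) ℝ)
    (hMinv : ∀ i, IsUnit (R i * J * (R i)ᵀ))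
    (U : Set (Fin n → ℝ)) (hU : IsOpen U) (hu : ustar ∈ U)
    (T : ∀ i, (Fin n → ℝ) → (Fin (m i) → ℝ))
    (hTdiff : ∀ i, ∀ u ∈ U, DifferentiableAt ℝ (T i) u)
    (hT0 : ∀ i, T i ustar = 0)
    (heq : ∀ i, ∀ u ∈ U, (R i) *ᵥ F (u - (R i)ᵀ *ᵥ T i u) = 0)
    (hDT : ∀ i v, fderiv ℝ (T i) ustar v
      = (R i * J * (R i)ᵀ)⁻¹ *ᵥ ((R i) *ᵥ (J *ᵥ v))) :
    ∀ v, fderiv ℝ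
        (fun u => (∑ i ∈ Finset.univ.erase (0 : Fin (N + 1)),
            (R i)ᵀ *ᵥ T i (u - (R 0)ᵀ *ᵥ T 0 u)) + (R 0)ᵀ *ᵥ T 0 u) ustar v
      = ((∑ i ∈ Finset.univ.erase (0 : Fin (N + 1)),
            (R i)ᵀ * (R i * J * (R i)ᵀ)⁻¹ * R i
              * (1 - J * (R 0)ᵀ * (R 0 * J * (R 0)ᵀ)⁻¹ * R 0))
          + (R 0)ᵀ * (R 0 * J * (R 0)ᵀ)⁻¹ * R 0) *ᵥ (J *ᵥ v) := by
  intro v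
  have hT : ∀ i, HasFDerivAt (T i) (fderiv ℝ (T i) ustar) ustar :=
    fun i => (hTdiff i ustar hu).hasFDerivAt
  let P : ∀ i, (Fin (m i) → ℝ) →L[ℝ] (Fin n → ℝ) :=
    fun i => LinearMap.toContinuousLinearMap (Matrix.mulVecLin (R i)ᵀ)
  have hP : ∀ i w, P i w = (R i)ᵀ *ᵥ w := fun i w => rfl
  have h0 : HasFDerivAt (fun u => (R 0)ᵀ *ᵥ T 0 u)
      ((P 0).comp (fderiv ℝ (T 0) ustar)) ustar :=
    (P 0).hasFDerivAt.comp ustar (hT 0)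
  have hw : HasFDerivAt (fun u => u - (R 0)ᵀ *ᵥ T 0 u)
      (ContinuousLinearMap.id ℝ (Fin n → ℝ) - (P 0).comp (fderiv ℝ (T 0) ustar)) ustar :=
    (hasFDerivAt_id ustar).sub h0
  have hpt : ustar - (R 0)ᵀ *ᵥ T 0 ustar = ustar := by
    rw [hT0, Matrix.mulVec_zero, sub_zero]
  have hi : ∀ i, HasFDerivAt (fun u => (R i)ᵀ *ᵥ T i (u - (R 0)ᵀ *ᵥ T 0 u))
      ((P i).comp ((fderiv ℝ (T i) ustar).comp
        (ContinuousLinearMap.id ℝ (Fin n → ℝ) - (P 0).comp (fderiv ℝ (T 0) ustar)))) ustar := by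
    intro i
    have hTi : HasFDerivAt (T i) (fderiv ℝ (T i) ustar) (ustar - (R 0)ᵀ *ᵥ T 0 ustar) := by
      rw [hpt]; exact hT i
    exact (P i).hasFDerivAt.comp ustar (HasFDerivAt.comp ustar hTi hw)
  have hall := (HasFDerivAt.fun_sum (u := Finset.univ.erase (0 : Fin (N + 1)))
    (fun i _ => hi i)).fun_add h0
  rw [hall.fderiv, Matrix.add_mulVec, Matrix.sum_mulVec]
  simp only [ContinuousLinearMap.add_apply, ContinuousLinearMap.sum_apply,
    ContinuousLinearMap.comp_apply, ContinuousLinearMap.sub_apply,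
    ContinuousLinearMap.id_apply, hP, hDT]
  congr 1
  · refine Finset.sum_congr rfl fun i _ => ?_
    simp only [← Matrix.mulVec_mulVec, Matrix.sub_mulVec, Matrix.mulVec_sub, Matrix.one_mulVec]
  · simp only [← Matrix.mulVec_mulVec]
end
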